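/- arXiv:2405.06327 — 7 statements merged into one kernel-verified Lean document; each statement's English description precedes it below -/
import Mathlib

section
/- The backward error η of the approximate eigenpairs (λ̂_i, v̂_i), i = 1,…,p, satisfies η = ‖R ((G ⊙^T V^T)†)^T‖_F, where (G ⊙^T V^T)† is the Moore–Penrose pseudoinverse of G ⊙^T V^T; that is, the minimum in the definition of η is attained and equals ‖R ((G ⊙^T V^T)†)^T‖_F. -/
open Matrix Kronecker BigOperators

noncomputable section

/-- Frobenius norm of a complex matrix. -/
def fnorm {ι κ : Type*} [Fintype ι] [Fintype κ] (A : Matrix ι κ ℂ) : ℝ :=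
  Real.sqrt (∑ i, ∑ j, ‖A i j‖ ^ 2)

/-- The four Moore–Penrose conditions. -/
def IsMoorePenrose {ι κ : Type*} [Fintype ι] [Fintype κ]
    (A : Matrix ι κ ℂ) (B : Matrix κ ι ℂ) : Prop :=
  A * B * A = A ∧ B * A * B = B ∧ (A * B)ᴴ = A * B ∧ (B * A)ᴴ = B * A

open scoped Classical in
/-- The Moore–Penrose pseudoinverse (defined by choice; it always exists and is unique). -/
noncomputable def pinv {ι κ : Type*} [Fintype ι] [Fintype κ] (A : Matrix ι κ ℂ) :
    Matrix κ ι ℂ :=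
  if h : ∃ B, IsMoorePenrose A B then h.choose else 0

/-- The transposed Khatri–Rao product `G ⊙^T W`. -/
def krt {p k n : ℕ} (G : Matrix (Fin p) (Fin k) ℂ) (W : Matrix (Fin p) (Fin n) ℂ) :
    Matrix (Fin p) (Fin k × Fin n) ℂ :=
  Matrix.of fun i jl => G i jl.1 * W i jl.2

theorem exists_hpinv {κ : Type*} [Fintype κ] [DecidableEq κ] (H : Matrix κ κ ℂ)
    (hH : H.IsHermitian) :
    ∃ B : Matrix κ κ ℂ, Bᴴ = B ∧ H * B * H = H ∧ B * H * B = B ∧ (B * H)ᴴ = B * H := by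
  obtain ⟨U, d, hU, hHU⟩ : ∃ (U : Matrix κ κ ℂ) (d : κ → ℝ), Uᴴ * U = 1 ∧
      H = U * diagonal (fun i => (d i : ℂ)) * Uᴴ := by
    refine ⟨hH.eigenvectorUnitary, hH.eigenvalues, ?_, ?_⟩
    · exact Unitary.coe_star_mul_self hH.eigenvectorUnitary
    · have := hH.spectral_theorem
      rw [Unitary.conjStarAlgAut_apply] at this
      exact this
  have key : ∀ X Y : Matrix κ κ ℂ, (U * X * Uᴴ) * (U * Y * Uᴴ) = U * (X * Y) * Uᴴ := by
    intro X Y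
    calc _ = U * X * (Uᴴ * U) * Y * Uᴴ := by simp only [Matrix.mul_assoc]
      _ = _ := by rw [hU]; simp only [Matrix.mul_assoc, Matrix.mul_one]
  have hherm : ∀ e : κ → ℝ, (U * diagonal (fun i => (e i : ℂ)) * Uᴴ)ᴴ
      = U * diagonal (fun i => (e i : ℂ)) * Uᴴ := by
    intro e
    have : (diagonal (fun i => (e i : ℂ)))ᴴ = diagonal (fun i => (e i : ℂ)) := by
      rw [diagonal_conjTranspose]; congr 1; ext i; simp
    rw [conjTranspose_mul, conjTranspose_mul, this, conjTranspose_conjTranspose, Matrix.mul_assoc]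
  refine ⟨U * diagonal (fun i => (((d i)⁻¹ : ℝ) : ℂ)) * Uᴴ, hherm _, ?_, ?_, ?_⟩
  · rw [hHU, key, key, diagonal_mul_diagonal, diagonal_mul_diagonal]
    congr 3; ext i
    by_cases h : d i = 0 <;> simp [h]
  · rw [hHU, key, key, diagonal_mul_diagonal, diagonal_mul_diagonal]
    congr 3; ext i
    by_cases h : d i = 0 <;> simp [h]
  · rw [hHU, key, diagonal_mul_diagonal]
    have := hherm (fun i => (d i)⁻¹ * d i)
    push_cast at this ⊢
    exact this

open scoped ComplexOrder in
theorem exists_mp {ι κ : Type*} [Fintype ι] [Fintype κ] [DecidableEq κ] (A : Matrix ι κ ℂ) :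
    ∃ B, IsMoorePenrose A B := by
  obtain ⟨B, h1, h2, h3, h4⟩ := exists_hpinv (Aᴴ * A) (isHermitian_conjTranspose_mul_self A)
  refine ⟨B * Aᴴ, ?_, ?_, ?_, ?_⟩
  · have h5 : A * (B * (Aᴴ * A)) - A = 0 := by
      rw [← conjTranspose_mul_self_eq_zero, conjTranspose_sub, conjTranspose_mul, h4, Matrix.sub_mul,
        Matrix.mul_sub, Matrix.mul_sub]
      have e1 : B * (Aᴴ * A) * Aᴴ * (A * (B * (Aᴴ * A))) = B * (Aᴴ * A) * Aᴴ * A := by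
        calc _ = B * (Aᴴ * A) * (Aᴴ * A * B * (Aᴴ * A)) := by simp only [Matrix.mul_assoc]
          _ = _ := by rw [h2]; simp only [Matrix.mul_assoc]
      have e2 : Aᴴ * (A * (B * (Aᴴ * A))) = Aᴴ * A := by
        simpa only [Matrix.mul_assoc] using h2
      rw [e1, e2]; simp
    rw [← sub_eq_zero, ← h5]; simp only [Matrix.mul_assoc]
  · calc _ = B * (Aᴴ * A) * B * Aᴴ := by simp only [Matrix.mul_assoc]
      _ = _ := by rw [h3]
  · simp [conjTranspose_mul, h1, Matrix.mul_assoc]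
  · rw [Matrix.mul_assoc B]; exact h4

theorem pinv_spec {ι κ : Type*} [Fintype ι] [Fintype κ] [DecidableEq κ] (A : Matrix ι κ ℂ) :
    IsMoorePenrose A (pinv A) := by
  unfold pinv
  rw [dif_pos (exists_mp A)]
  exact (exists_mp A).choose_spec

theorem fnorm_eq_trace {ι κ : Type*} [Fintype ι] [Fintype κ] (A : Matrix ι κ ℂ) :
    fnorm A = Real.sqrt (trace (A * Aᴴ)).re := by
  unfold fnorm
  congr 1
  simp only [trace, diag, mul_apply, conjTranspose_apply, Complex.re_sum]
  refine Finset.sum_congr rfl fun i _ => Finset.sum_congr rfl fun j _ => ?_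
  rw [← Complex.normSq_eq_norm_sq, Complex.star_def, Complex.mul_conj, Complex.ofReal_re]

theorem fnorm_neg' {ι κ : Type*} [Fintype ι] [Fintype κ] (A : Matrix ι κ ℂ) :
    fnorm (-A) = fnorm A := by
  simp [fnorm]

theorem fnorm_proj_le {ι κ : Type*} [Fintype ι] [Fintype κ] [DecidableEq κ] (D : Matrix ι κ ℂ)
    (P : Matrix κ κ ℂ) (hP : Pᴴ = P) (hPP : P * P = P) : fnorm (D * P) ≤ fnorm D := by
  rw [fnorm_eq_trace, fnorm_eq_trace]
  apply Real.sqrt_le_sqrt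
  have e1 : D * Dᴴ = (D * P) * (D * P)ᴴ + (D * (1 - P)) * (D * (1 - P))ᴴ := by
    have e : P * P + (1 - P) * (1 - P) = 1 := by
      simp only [sub_mul, mul_sub, hPP, Matrix.one_mul, Matrix.mul_one]; abel
    rw [conjTranspose_mul, conjTranspose_mul, conjTranspose_sub, conjTranspose_one, hP]
    calc D * Dᴴ = D * (P * P + (1 - P) * (1 - P)) * Dᴴ := by rw [e, Matrix.mul_one]
      _ = _ := by rw [Matrix.mul_add, Matrix.add_mul]; simp only [Matrix.mul_assoc]
  have e2 : 0 ≤ (trace ((D * (1 - P)) * (D * (1 - P))ᴴ)).re := by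
    simp only [trace, diag, mul_apply (M := D * (1 - P)), conjTranspose_apply, Complex.re_sum]
    refine Finset.sum_nonneg fun i _ => Finset.sum_nonneg fun j _ => ?_
    rw [Complex.star_def, Complex.mul_conj, Complex.ofReal_re]
    exact Complex.normSq_nonneg _
  rw [e1, trace_add, Complex.add_re]
  linarith

/-- The backward error `η` of the approximate eigenpairs `(λ̂ᵢ, v̂ᵢ)`, `i = 1,…,p`, i.e. the
minimum of `‖[δF₁, …, δFₖ]‖_F` over all perturbations making the `(λ̂ᵢ, v̂ᵢ)` exact eigenpairs,
is attained and equals `‖R ((G ⊙ᵀ Vᵀ)†)ᵀ‖_F`, where `R = ∑ⱼ Fⱼ V fⱼ(Λ)`. -/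
theorem backward_error_eq (n k p : ℕ)
    (F : Fin k → Matrix (Fin n) (Fin n) ℂ)
    (f : Fin k → ℂ → ℂ) (lam : Fin p → ℂ) (v : Fin p → Fin n → ℂ)
    (G : Matrix (Fin p) (Fin k) ℂ) (hG : ∀ i j, G i j = f j (lam i))
    (V : Matrix (Fin n) (Fin p) ℂ) (hV : ∀ l i, V l i = v i l)
    (R : Matrix (Fin n) (Fin p) ℂ)
    (hR : R = ∑ j, F j * V * Matrix.diagonal fun i => f j (lam i)) :
    IsLeast
      {x : ℝ | ∃ δF : Fin k → Matrix (Fin n) (Fin n) ℂ,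
        (∀ i, ∑ j, f j (lam i) • ((F j + δF j).mulVec (v i)) = 0) ∧
        x = fnorm (Matrix.of fun (m : Fin n) (jl : Fin k × Fin n) => δF jl.1 m jl.2)}
      (fnorm (R * (pinv (krt G Vᵀ))ᵀ)) := by
  set K := krt G Vᵀ with hK
  obtain ⟨h1, h2, h3, h4⟩ := pinv_spec K
  set B := pinv K
  let blk : (Fin k → Matrix (Fin n) (Fin n) ℂ) → Matrix (Fin n) (Fin k × Fin n) ℂ :=
    fun δF => Matrix.of fun (m : Fin n) (jl : Fin k × Fin n) => δF jl.1 m jl.2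
  have hblk : ∀ E : Fin k → Matrix (Fin n) (Fin n) ℂ, ∀ m i,
      (blk E * Kᵀ) m i = (∑ j, f j (lam i) • (E j).mulVec (v i)) m := by
    intro E m i
    simp only [mul_apply, Finset.sum_apply, Pi.smul_apply, smul_eq_mul, mulVec, dotProduct,
      Fintype.sum_prod_type, Finset.mul_sum]
    refine Finset.sum_congr rfl fun j _ => Finset.sum_congr rfl fun l _ => ?_
    simp only [blk, hK, krt, of_apply, transpose_apply, hG, hV]
    ring
  have hRA : R = blk F * Kᵀ := by
    ext m i
    rw [hblk, hR]
    simp only [Matrix.sum_apply, mul_diagonal]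
    simp only [Finset.sum_apply, Pi.smul_apply, smul_eq_mul,
      mulVec, dotProduct, mul_apply, hV]
    exact Finset.sum_congr rfl fun j _ => mul_comm _ _
  have hfeas : ∀ E : Fin k → Matrix (Fin n) (Fin n) ℂ,
      (∀ i, ∑ j, f j (lam i) • ((F j + E j).mulVec (v i)) = 0) ↔ blk E * Kᵀ = -R := by
    intro E
    have hadd : blk (fun j => F j + E j) = blk F + blk E := by
      ext m jl; simp [blk]
    have : (∀ i, ∑ j, f j (lam i) • ((F j + E j).mulVec (v i)) = 0) ↔
        blk (fun j => F j + E j) * Kᵀ = 0 := by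
      constructor
      · intro h
        ext m i
        exact (hblk (fun j => F j + E j) m i).trans (congrFun (h i) m)
      · intro h i
        ext m
        exact (hblk (fun j => F j + E j) m i).symm.trans (congrFun (congrFun h m) i)
    rw [this, hadd, Matrix.add_mul, ← hRA, add_comm, add_eq_zero_iff_eq_neg]
  have hP : ((B * K)ᵀ)ᴴ = (B * K)ᵀ := by
    have : ((B * K)ᵀ)ᴴ = ((B * K)ᴴ)ᵀ := rfl
    rw [this, h4]
  have hPP : (B * K)ᵀ * (B * K)ᵀ = (B * K)ᵀ := by
    rw [← transpose_mul, ← Matrix.mul_assoc, h2]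
  constructor
  · refine ⟨fun j => Matrix.of fun m l => (-(R * Bᵀ)) m (j, l), ?_, ?_⟩
    · rw [hfeas]
      have : blk (fun j => Matrix.of fun m l => (-(R * Bᵀ)) m (j, l)) = -(R * Bᵀ) := by
        ext m jl; rfl
      rw [this, hRA, Matrix.neg_mul, Matrix.mul_assoc, Matrix.mul_assoc, ← transpose_mul,
        ← transpose_mul, h1]
    · rw [← fnorm_neg']; rfl
  · rintro x ⟨E, hE, rfl⟩
    rw [hfeas] at hE
    have : R * Bᵀ = -(blk E * (B * K)ᵀ) := by
      rw [transpose_mul, ← Matrix.mul_assoc, hE, Matrix.neg_mul, neg_neg]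
    rw [this, fnorm_neg']
    exact fnorm_proj_le _ _ hP hPP
end
end

section
/- The backward error η of the approximate eigenpairs (λ̂_i, v̂_i), i = 1,…,p, satisfies η ≤ σ_p̂(G ⊙^T V^T)^{−1} ‖R‖_F, where p̂ is the rank of G ⊙^T V^T and σ_p̂(G ⊙^T V^T) is its smallest nonzero singular value. -/
open Matrix Kronecker BigOperators

noncomputable section

/-- Euclidean norm of a complex vector. -/
def vnorm {ι : Type*} [Fintype ι] (v : ι → ℂ) : ℝ :=
  Real.sqrt (∑ i, ‖v i‖ ^ 2)

/-- `s` is a singular value of `A`: `s ≥ 0` and `s²` is an eigenvalue of `Aᴴ A`. -/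
def IsSingularValue {ι κ : Type*} [Fintype ι] [Fintype κ] (A : Matrix ι κ ℂ) (s : ℝ) : Prop :=
  0 ≤ s ∧ ∃ w : κ → ℂ, w ≠ 0 ∧ (Aᴴ * A).mulVec w = ((s : ℂ) ^ 2) • w

/-- The smallest nonzero singular value of `A`, i.e. `σ_p̂(A)` where `p̂ = rank A`. -/
noncomputable def sigmaMinPos {ι κ : Type*} [Fintype ι] [Fintype κ] (A : Matrix ι κ ℂ) : ℝ :=
  sInf {s : ℝ | IsSingularValue A s ∧ 0 < s}

/-- The smallest singular value of a square matrix `A`, the minimum of `‖A v‖₂` over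
unit vectors `v`. -/
noncomputable def sigmaMinSq {n : ℕ} (A : Matrix (Fin n) (Fin n) ℂ) : ℝ :=
  sInf {x : ℝ | ∃ w : Fin n → ℂ, vnorm w = 1 ∧ x = vnorm (A.mulVec w)}

lemma sq_sum_eq {ι : Type*} [Fintype ι] (v : ι → ℂ) :
    ((∑ i, ‖v i‖ ^ 2 : ℝ) : ℂ) = star v ⬝ᵥ v := by
  simp only [dotProduct, Pi.star_apply, RCLike.star_def, Complex.conj_mul']
  push_cast
  rfl

lemma sing_finite {ι κ : Type*} [Fintype ι] [Fintype κ] [DecidableEq κ] (A : Matrix ι κ ℂ) :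
    {s : ℝ | IsSingularValue A s ∧ 0 < s}.Finite := by
  have h := Module.End.finite_hasEigenvalue (Matrix.toLin' (Aᴴ * A))
  refine Set.Finite.of_finite_image (f := fun s : ℝ => ((s : ℂ) ^ 2)) (h.subset ?_) ?_
  · rintro _ ⟨s, ⟨⟨_, w, hw, hws⟩, _⟩, rfl⟩
    exact Module.End.hasEigenvalue_of_hasEigenvector (x := w)
      ⟨Module.End.mem_eigenspace_iff.2 (by rw [Matrix.toLin'_apply]; exact hws), hw⟩
  · rintro s ⟨_, hs⟩ t ⟨_, ht⟩ hst
    have : s ^ 2 = t ^ 2 := by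
      have h' : (s : ℂ) ^ 2 = (t : ℂ) ^ 2 := hst
      exact_mod_cast h'
    exact (pow_left_inj₀ hs.le ht.le two_ne_zero).1 this

open scoped ComplexOrder in
lemma key {ι κ : Type*} [Fintype ι] [Fintype κ] [DecidableEq κ] (A : Matrix ι κ ℂ)
    (x : κ → ℂ) : ∃ d : κ → ℂ, A *ᵥ d = A *ᵥ x ∧
      ∑ j, ‖d j‖ ^ 2 ≤ ((sigmaMinPos A)⁻¹) ^ 2 * ∑ i, ‖(A *ᵥ x) i‖ ^ 2 := by
  have hH : (Aᴴ * A).IsHermitian := Matrix.isHermitian_conjTranspose_mul_self A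
  have hpos : ∀ i, 0 ≤ hH.eigenvalues i :=
    (Matrix.posSemidef_conjTranspose_mul_self A).eigenvalues_nonneg
  have hsv : ∀ i, hH.eigenvalues i ≠ 0 →
      Real.sqrt (hH.eigenvalues i) ∈ {s : ℝ | IsSingularValue A s ∧ 0 < s} := by
    intro i hi
    refine ⟨⟨Real.sqrt_nonneg _, ⇑(hH.eigenvectorBasis i), ?_, ?_⟩,
      Real.sqrt_pos.2 (lt_of_le_of_ne (hpos i) hi.symm)⟩
    · intro h0
      have h1 := hH.eigenvectorBasis.orthonormal.ne_zero i
      apply h1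
      ext j
      exact congrFun h0 j
    · rw [hH.mulVec_eigenvectorBasis, ← Complex.ofReal_pow, Real.sq_sqrt (hpos i)]
      ext j
      simp
  obtain ⟨U, hU1, hU2, hS⟩ : ∃ U : Matrix κ κ ℂ, Uᴴ * U = 1 ∧ U * Uᴴ = 1 ∧
      Aᴴ * A = U * diagonal (fun i => (hH.eigenvalues i : ℂ)) * Uᴴ := by
    refine ⟨hH.eigenvectorUnitary, ?_, ?_, ?_⟩
    · exact Unitary.coe_star_mul_self hH.eigenvectorUnitary
    · exact Unitary.coe_mul_star_self hH.eigenvectorUnitary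
    · have := hH.spectral_theorem
      rw [Unitary.conjStarAlgAut_apply] at this
      exact this
  set μ := hH.eigenvalues with hμ
  set c : κ → ℂ := fun i => if μ i = 0 then 0 else (Uᴴ *ᵥ x) i with hc
  have hUc : Uᴴ *ᵥ (U *ᵥ c) = c := by rw [mulVec_mulVec, hU1, one_mulVec]
  have hAd : A *ᵥ (U *ᵥ c) = A *ᵥ x := by
    rw [← sub_eq_zero, ← mulVec_sub, ← Matrix.conjTranspose_mul_self_mulVec_eq_zero, hS,
      ← mulVec_mulVec, ← mulVec_mulVec, mulVec_sub, hUc]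
    refine (congrArg (U *ᵥ ·) ?_).trans (mulVec_zero U)
    ext i
    rw [mulVec_diagonal]
    by_cases h : μ i = 0 <;> simp [hc, h]
  refine ⟨U *ᵥ c, hAd, ?_⟩
  have hn1 : ∑ j, ‖(U *ᵥ c) j‖ ^ 2 = ∑ j, ‖c j‖ ^ 2 := by
    have : ((∑ j, ‖(U *ᵥ c) j‖ ^ 2 : ℝ) : ℂ) = ((∑ j, ‖c j‖ ^ 2 : ℝ) : ℂ) := by
      rw [sq_sum_eq, sq_sum_eq, star_mulVec, ← dotProduct_mulVec, hUc]
    exact_mod_cast this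
  have hn2 : ∑ i, ‖(A *ᵥ x) i‖ ^ 2 = ∑ j, μ j * ‖c j‖ ^ 2 := by
    have : ((∑ i, ‖(A *ᵥ x) i‖ ^ 2 : ℝ) : ℂ) = ((∑ j, μ j * ‖c j‖ ^ 2 : ℝ) : ℂ) := by
      rw [sq_sum_eq, ← hAd, star_mulVec, ← dotProduct_mulVec, mulVec_mulVec _ Aᴴ A, hS,
        ← mulVec_mulVec, ← mulVec_mulVec, hUc, star_mulVec, ← dotProduct_mulVec,
        mulVec_mulVec _ Uᴴ U, hU1, one_mulVec]
      simp only [dotProduct, mulVec_diagonal, Pi.star_apply, RCLike.star_def]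
      push_cast
      refine Finset.sum_congr rfl fun j _ => ?_
      rw [← Complex.conj_mul']
      ring
    exact_mod_cast this
  rw [hn1, hn2, Finset.mul_sum]
  refine Finset.sum_le_sum fun j _ => ?_
  by_cases h : μ j = 0
  · simp [hc, h]
  have hm := hsv j h
  have hσ : sigmaMinPos A ∈ {s : ℝ | IsSingularValue A s ∧ 0 < s} :=
    Set.Nonempty.csInf_mem ⟨_, hm⟩ (sing_finite A)
  have hle : sigmaMinPos A ≤ Real.sqrt (μ j) := csInf_le (sing_finite A).bddBelow hm
  have hσ0 : 0 < sigmaMinPos A := hσ.2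
  have h2 : sigmaMinPos A ^ 2 ≤ μ j := by
    rw [← Real.sq_sqrt (hpos j)]
    exact pow_le_pow_left₀ hσ0.le hle 2
  have h3 : 1 ≤ ((sigmaMinPos A)⁻¹) ^ 2 * μ j := by
    rw [inv_pow, ← div_eq_inv_mul, one_le_div (by positivity)]
    exact h2
  rw [← mul_assoc]
  exact le_mul_of_one_le_left (by positivity) h3

/-- Upper bound for the backward error of approximate eigenpairs:
`η ≤ σ_p̂(G ⊙ᵀ Vᵀ)⁻¹ ‖R‖_F`, where `p̂` is the rank of `G ⊙ᵀ Vᵀ` and `σ_p̂(G ⊙ᵀ Vᵀ)` is its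
smallest nonzero singular value. -/
theorem backward_error_upper_bound (n k p : ℕ)
    (F : Fin k → Matrix (Fin n) (Fin n) ℂ)
    (f : Fin k → ℂ → ℂ) (lam : Fin p → ℂ) (v : Fin p → Fin n → ℂ)
    (G : Matrix (Fin p) (Fin k) ℂ) (hG : ∀ i j, G i j = f j (lam i))
    (V : Matrix (Fin n) (Fin p) ℂ) (hV : ∀ l i, V l i = v i l)
    (R : Matrix (Fin n) (Fin p) ℂ)
    (hR : R = ∑ j, F j * V * Matrix.diagonal fun i => f j (lam i)) :
    sInf {x : ℝ | ∃ δF : Fin k → Matrix (Fin n) (Fin n) ℂ,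
        (∀ i, ∑ j, f j (lam i) • ((F j + δF j).mulVec (v i)) = 0) ∧
        x = fnorm (Matrix.of fun (m : Fin n) (jl : Fin k × Fin n) => δF jl.1 m jl.2)}
      ≤ (sigmaMinPos (krt G Vᵀ))⁻¹ * fnorm R := by
  set A := krt G Vᵀ with hA
  have hRA : ∀ m i, R m i = (A *ᵥ (fun jl : Fin k × Fin n => F jl.1 m jl.2)) i := by
    intro m i
    rw [hR, Matrix.sum_apply]
    simp only [mul_diagonal]
    simp only [mulVec, dotProduct, hA, krt, of_apply, Fintype.sum_prod_type,
      Matrix.mul_apply, transpose_apply, hG, Finset.sum_mul]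
    refine Finset.sum_congr rfl fun j _ => Finset.sum_congr rfl fun l _ => ?_
    ring
  choose d hd1 hd2 using fun m : Fin n => key A (fun jl : Fin k × Fin n => F jl.1 m jl.2)
  have hσ : 0 ≤ sigmaMinPos A := Real.sInf_nonneg fun s hs => hs.2.le
  refine le_trans (b := fnorm (Matrix.of fun (m : Fin n) (jl : Fin k × Fin n) => - d m jl))
    (csInf_le ?_ ?_) ?_
  · refine ⟨0, ?_⟩
    rintro _ ⟨_, _, rfl⟩
    exact Real.sqrt_nonneg _
  · refine ⟨fun j => Matrix.of fun m l => - d m (j, l), ?_, rfl⟩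
    intro i
    ext m
    have h := congrFun (hd1 m) i
    simp only [mulVec, dotProduct, hA, krt, of_apply, Fintype.sum_prod_type, transpose_apply,
      hG, hV] at h
    rw [← sub_eq_zero, ← neg_eq_zero] at h
    rw [Finset.sum_apply, Pi.zero_apply, ← h, neg_sub, ← Finset.sum_sub_distrib]
    refine Finset.sum_congr rfl fun j _ => ?_
    simp only [Pi.smul_apply, mulVec, dotProduct, smul_eq_mul, Finset.mul_sum, Matrix.add_apply,
      of_apply]
    rw [← Finset.sum_sub_distrib]
    refine Finset.sum_congr rfl fun l _ => ?_
    ring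
  · rw [fnorm, fnorm]
    apply Real.sqrt_le_iff.2
    refine ⟨mul_nonneg (inv_nonneg.2 hσ) (Real.sqrt_nonneg _), ?_⟩
    rw [mul_pow, Real.sq_sqrt (by positivity), Finset.mul_sum]
    refine Finset.sum_le_sum fun m _ => ?_
    simp only [of_apply, norm_neg, hRA]
    exact hd2 m
end
end

section
/- The minimum-norm perturbations δF_1, …, δF_k realizing the backward error η (i.e., the minimum Frobenius-norm solution of the constraint Σ_{j=1}^k f_j(λ̂_i)(F_j + δF_j) v̂_i = 0 for i = 1,…,p) can be written as δF_j = −R M_j^T for suitable matrices M_j ∈ ℂ^{n×p}, j = 1,…,k. In particular each δF_j has rank at most p, and every linear combination of δF_1, …, δF_k has rank at most p. -/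
open Matrix Kronecker BigOperators

noncomputable section

/-- The minimum-norm perturbations `δFⱼ` realizing the backward error (the minimum Frobenius
norm solution, given by `[vec δF₁; …; vec δFₖ] = -((G ⊙ᵀ Vᵀ)† ⊗ Iₙ) r`) can be written as
`δFⱼ = -R Mⱼᵀ` for suitable `n × p` matrices `Mⱼ`; in particular each `δFⱼ` has rank at most
`p`, and so does every linear combination of the `δFⱼ`. -/
theorem minimal_perturbations_low_rank (n k p : ℕ)
    (F δF : Fin k → Matrix (Fin n) (Fin n) ℂ)
    (f : Fin k → ℂ → ℂ) (lam : Fin p → ℂ) (v : Fin p → Fin n → ℂ)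
    (G : Matrix (Fin p) (Fin k) ℂ) (hG : ∀ i j, G i j = f j (lam i))
    (V : Matrix (Fin n) (Fin p) ℂ) (hV : ∀ l i, V l i = v i l)
    (R : Matrix (Fin n) (Fin p) ℂ)
    (hR : R = ∑ j, F j * V * Matrix.diagonal fun i => f j (lam i))
    (r : Fin p × Fin n → ℂ)
    (hr : ∀ i m, r (i, m) = ∑ j, f j (lam i) * ((F j).mulVec (v i)) m)
    (hδF : ∀ (j : Fin k) (l m : Fin n), δF j m l =
      -((pinv (krt G Vᵀ) ⊗ₖ (1 : Matrix (Fin n) (Fin n) ℂ)).mulVec r) ((j, l), m)) :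
    (∃ M : Fin k → Matrix (Fin n) (Fin p) ℂ, ∀ j, δF j = -(R * (M j)ᵀ)) ∧
    (∀ j, (δF j).rank ≤ p) ∧
    (∀ c : Fin k → ℂ, (∑ j, c j • δF j).rank ≤ p) := by
  have hRr : ∀ i m, r (i, m) = R m i := by
    intro i m
    rw [hr, hR, Matrix.sum_apply]
    refine Finset.sum_congr rfl fun j _ => ?_
    rw [Matrix.mul_diagonal, mul_comm]
    congr 1
    simp only [Matrix.mulVec, dotProduct, Matrix.mul_apply, hV]
  have key : ∀ j, δF j =
      -(R * (Matrix.of fun (l : Fin n) (i : Fin p) => pinv (krt G Vᵀ) (j, l) i)ᵀ) := by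
    intro j
    ext m l
    rw [hδF, Matrix.neg_apply, Matrix.mul_apply]
    congr 1
    simp only [Matrix.mulVec, dotProduct, Fintype.sum_prod_type, Matrix.kroneckerMap_apply,
      Matrix.one_apply, hRr, Matrix.transpose_apply, Matrix.of_apply]
    refine Finset.sum_congr rfl fun i _ => ?_
    simp [mul_comm]
  have rk : ∀ N : Matrix (Fin p) (Fin n) ℂ, (R * N).rank ≤ p := fun N =>
    (Matrix.rank_mul_le_left R N).trans (by simpa using Matrix.rank_le_card_width R)
  refine ⟨⟨_, key⟩, ?_, ?_⟩
  · intro j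
    rw [key j, ← Matrix.mul_neg]
    exact rk _
  · intro c
    have : ∑ j, c j • δF j = R * ∑ j, c j •
        -(Matrix.of fun (l : Fin n) (i : Fin p) => pinv (krt G Vᵀ) (j, l) i)ᵀ := by
      rw [Matrix.mul_sum]
      refine Finset.sum_congr rfl fun j _ => ?_
      rw [Matrix.mul_smul, Matrix.mul_neg, ← key j]
    rw [this]
    exact rk _
end
end

section
/- Let σ̂_i denote the smallest singular value of F(λ̂_i) = Σ_{j=1}^k f_j(λ̂_i) F_j for i = 1,…,p. If δF_1, …, δF_k ∈ ℂ^{n×n} and nonzero vectors v_1, …, v_p ∈ ℂ^n satisfy Σ_{j=1}^k f_j(λ̂_i)(F_j + δF_j) v_i = 0 for all i = 1,…,p, then ‖[δF_1, …, δF_k]‖_F ≥ max_{i=1,…,p} σ̂_i / √(Σ_{j=1}^k |f_j(λ̂_i)|²). Consequently the eigenvalue backward error η (the minimum of ‖[δF_1, …, δF_k]‖_F over all such perturbations and all choices of nonzero vectors v_i) satisfies η ≥ max_{i} σ̂_i / √(Σ_j |f_j(λ̂_i)|²). -/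
open Matrix Kronecker BigOperators

noncomputable section

lemma vnorm_smul_aux {ι : Type*} [Fintype ι] (c : ℂ) (v : ι → ℂ) :
    vnorm (c • v) = ‖c‖ * vnorm v := by
  unfold vnorm
  simp only [Pi.smul_apply, smul_eq_mul, norm_mul, mul_pow]
  rw [← Finset.mul_sum, Real.sqrt_mul (by positivity), Real.sqrt_sq (norm_nonneg _)]

lemma vnorm_pos_aux {ι : Type*} [Fintype ι] (v : ι → ℂ) (hv : v ≠ 0) : 0 < vnorm v := by
  obtain ⟨i, hi⟩ := Function.ne_iff.mp hv
  unfold vnorm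
  apply Real.sqrt_pos.mpr
  have h1 : 0 < ‖v i‖ ^ 2 := by
    have : 0 < ‖v i‖ := norm_pos_iff.mpr hi
    positivity
  exact lt_of_lt_of_le h1
    (Finset.single_le_sum (f := fun i => ‖v i‖ ^ 2) (fun _ _ => by positivity) (Finset.mem_univ i))

lemma norm_sum_mul_sq_aux {ι : Type*} [Fintype ι] (a b : ι → ℂ) :
    ‖∑ i, a i * b i‖ ^ 2 ≤ (∑ i, ‖a i‖ ^ 2) * ∑ i, ‖b i‖ ^ 2 := by
  have h1 : ‖∑ i, a i * b i‖ ≤ ∑ i, ‖a i‖ * ‖b i‖ :=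
    (norm_sum_le _ _).trans (by simp)
  exact (pow_le_pow_left₀ (norm_nonneg _) h1 2).trans (Finset.sum_mul_sq_le_sq_mul_sq _ _ _)

lemma lower_aux {n k : ℕ} (F δF : Fin k → Matrix (Fin n) (Fin n) ℂ) (c : Fin k → ℂ)
    (v : Fin n → ℂ) (hv : v ≠ 0) (h : ∑ j, c j • ((F j + δF j).mulVec v) = 0) :
    sigmaMinSq (∑ j, c j • F j) / Real.sqrt (∑ j, ‖c j‖ ^ 2) ≤
      fnorm (Matrix.of fun (m : Fin n) (jl : Fin k × Fin n) => δF jl.1 m jl.2) := by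
  have hf : 0 ≤ fnorm (Matrix.of fun (m : Fin n) (jl : Fin k × Fin n) => δF jl.1 m jl.2) :=
    Real.sqrt_nonneg _
  apply div_le_of_le_mul₀ (Real.sqrt_nonneg _) hf
  have hvp := vnorm_pos_aux v hv
  set w : Fin n → ℂ := ((vnorm v)⁻¹ : ℂ) • v with hw
  have hw1 : vnorm w = 1 := by
    rw [hw, vnorm_smul_aux, norm_inv, Complex.norm_real, Real.norm_of_nonneg hvp.le,
      inv_mul_cancel₀ hvp.ne']
  have hw0 : ∑ j, c j • ((F j + δF j).mulVec w) = 0 := by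
    simp only [hw, Matrix.mulVec_smul]
    simp only [smul_comm (c _)]
    rw [← Finset.smul_sum, h, smul_zero]
  have hle : sigmaMinSq (∑ j, c j • F j) ≤ vnorm ((∑ j, c j • F j).mulVec w) := by
    apply csInf_le
    · refine ⟨0, ?_⟩
      rintro x ⟨w, -, rfl⟩
      exact Real.sqrt_nonneg _
    · exact ⟨w, hw1, rfl⟩
  refine hle.trans ?_
  have hw2 : ∑ l, ‖w l‖ ^ 2 = 1 := by
    unfold vnorm at hw1
    exact Real.sqrt_eq_one.mp hw1
  unfold vnorm fnorm
  rw [← Real.sqrt_mul (by positivity)]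
  apply Real.sqrt_le_sqrt
  rw [Finset.sum_mul]
  apply Finset.sum_le_sum
  intro m _
  have e : (∑ j, c j • F j).mulVec w m =
      - ∑ jl : Fin k × Fin n, δF jl.1 m jl.2 * (c jl.1 * w jl.2) := by
    have h3 := congrFun hw0 m
    simp only [Matrix.add_mulVec, smul_add, Finset.sum_add_distrib, Pi.add_apply,
      Pi.zero_apply] at h3
    rw [Matrix.sum_mulVec]
    simp only [Matrix.smul_mulVec]
    rw [eq_neg_of_add_eq_zero_left h3, Fintype.sum_prod_type]
    simp only [Finset.sum_apply, Pi.smul_apply, smul_eq_mul, Matrix.mulVec, dotProduct,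
      Finset.mul_sum]
    congr 1
    refine Finset.sum_congr rfl fun j _ => Finset.sum_congr rfl fun l _ => by ring
  rw [e, norm_neg]
  refine (norm_sum_mul_sq_aux _ _).trans (le_of_eq ?_)
  simp only [Matrix.of_apply]
  congr 1
  rw [Fintype.sum_prod_type]
  simp only [norm_mul, mul_pow, ← Finset.mul_sum, hw2, mul_one]

/-- Lower bound for the eigenvalue backward error: if the perturbed problem has the `λ̂ᵢ` as
eigenvalues (with some nonzero eigenvectors `vᵢ`), then
`‖[δF₁, …, δFₖ]‖_F ≥ σ̂ᵢ / √(∑ⱼ |fⱼ(λ̂ᵢ)|²)` for every `i`, where `σ̂ᵢ` is the smallest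
singular value of `F(λ̂ᵢ) = ∑ⱼ fⱼ(λ̂ᵢ) Fⱼ`; consequently the eigenvalue backward error `η`
satisfies `η ≥ max_i σ̂ᵢ / √(∑ⱼ |fⱼ(λ̂ᵢ)|²)`. -/
theorem eigenvalue_backward_error_lower_bound (n k p : ℕ) (hn : 0 < n)
    (F : Fin k → Matrix (Fin n) (Fin n) ℂ)
    (f : Fin k → ℂ → ℂ) (lam : Fin p → ℂ)
    (sig : Fin p → ℝ)
    (hsig : ∀ i, sig i = sigmaMinSq (∑ j, f j (lam i) • F j)) :
    (∀ (δF : Fin k → Matrix (Fin n) (Fin n) ℂ) (v : Fin p → Fin n → ℂ),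
        (∀ i, v i ≠ 0) →
        (∀ i, ∑ j, f j (lam i) • ((F j + δF j).mulVec (v i)) = 0) →
        ∀ i, sig i / Real.sqrt (∑ j, ‖f j (lam i)‖ ^ 2) ≤
          fnorm (Matrix.of fun (m : Fin n) (jl : Fin k × Fin n) => δF jl.1 m jl.2)) ∧
    (∀ i, sig i / Real.sqrt (∑ j, ‖f j (lam i)‖ ^ 2) ≤
      sInf {x : ℝ | ∃ (δF : Fin k → Matrix (Fin n) (Fin n) ℂ) (v : Fin p → Fin n → ℂ),
        (∀ i, v i ≠ 0) ∧
        (∀ i, ∑ j, f j (lam i) • ((F j + δF j).mulVec (v i)) = 0) ∧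
        x = fnorm (Matrix.of fun (m : Fin n) (jl : Fin k × Fin n) => δF jl.1 m jl.2)}) := by
  have key : ∀ (δF : Fin k → Matrix (Fin n) (Fin n) ℂ) (v : Fin p → Fin n → ℂ),
        (∀ i, v i ≠ 0) →
        (∀ i, ∑ j, f j (lam i) • ((F j + δF j).mulVec (v i)) = 0) →
        ∀ i, sig i / Real.sqrt (∑ j, ‖f j (lam i)‖ ^ 2) ≤
          fnorm (Matrix.of fun (m : Fin n) (jl : Fin k × Fin n) => δF jl.1 m jl.2) := by
    intro δF v hv h i
    rw [hsig i]
    exact lower_aux F δF (fun j => f j (lam i)) (v i) (hv i) (h i)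
  refine ⟨key, fun i => ?_⟩
  apply le_csInf
  · refine ⟨_, fun j => - F j, fun _ _ => 1, ?_, ?_, rfl⟩
    · intro i h0
      exact one_ne_zero (congrFun h0 ⟨0, hn⟩)
    · intro i
      simp
  · rintro x ⟨δF, v, hv, h, rfl⟩
    exact key δF v hv h i
end
end

section
/- For i = 1,…,p let σ̂_i be the smallest singular value of F(λ̂_i) = Σ_{j=1}^k f_j(λ̂_i) F_j and let v̂_i be an associated right singular vector (unit vector with ‖F(λ̂_i) v̂_i‖₂ = σ̂_i). With V = [v̂_1, …, v̂_p] and p̂ the rank of G ⊙^T V^T, there exist perturbations δF_1, …, δF_k ∈ ℂ^{n×n} with Σ_{j=1}^k f_j(λ̂_i)(F_j + δF_j) v̂_i = 0 for all i and ‖[δF_1, …, δF_k]‖_F ≤ σ_p̂(G ⊙^T V^T)^{−1} √(Σ_{i=1}^p σ̂_i²) ≤ σ_p̂(G ⊙^T V^T)^{−1} √p · max_{i=1,…,p} σ̂_i. Consequently the eigenvalue backward error η satisfies η ≤ σ_p̂(G ⊙^T V^T)^{−1} √p · max_i σ̂_i. -/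
open Matrix Kronecker BigOperators

noncomputable section

theorem vnorm_sq' {ι : Type*} [Fintype ι] (v : ι → ℂ) : vnorm v ^ 2 = ∑ i, ‖v i‖ ^ 2 :=
  Real.sq_sqrt (Finset.sum_nonneg fun _ _ => sq_nonneg _)

theorem vnorm_dot {ι : Type*} [Fintype ι] (v : ι → ℂ) :
    ((vnorm v ^ 2 : ℝ) : ℂ) = star v ⬝ᵥ v := by
  rw [vnorm_sq']
  push_cast
  simp only [dotProduct, Pi.star_apply]
  refine Finset.sum_congr rfl fun i _ => ?_
  exact (RCLike.conj_mul (v i)).symm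

theorem vnorm_diag {ι κ : Type*} [Fintype ι] [Fintype κ] [DecidableEq κ] (M : Matrix ι κ ℂ)
    (mu : κ → ℝ) (h : Mᴴ * M = Matrix.diagonal (fun a => (mu a : ℂ))) (z : κ → ℂ) :
    vnorm (M *ᵥ z) ^ 2 = ∑ a, mu a * ‖z a‖ ^ 2 := by
  have : ((vnorm (M *ᵥ z) ^ 2 : ℝ) : ℂ) = ((∑ a, mu a * ‖z a‖ ^ 2 : ℝ) : ℂ) := by
    rw [vnorm_dot, star_mulVec, ← dotProduct_mulVec, mulVec_mulVec, h]
    push_cast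
    simp only [dotProduct, Pi.star_apply, mulVec_diagonal]
    refine Finset.sum_congr rfl fun i _ => ?_
    have hz : star (z i) * z i = (‖z i‖ : ℂ) ^ 2 := RCLike.conj_mul (z i)
    rw [← hz]
    ring
  exact_mod_cast this

theorem vnorm_sq_zero {ι : Type*} [Fintype ι] (v : ι → ℂ) (h : vnorm v ^ 2 = 0) : v = 0 := by
  rw [vnorm_sq', Finset.sum_eq_zero_iff_of_nonneg (fun _ _ => sq_nonneg _)] at h
  funext i
  simpa using h i (Finset.mem_univ i)

theorem sv_finite {ι κ : Type*} [Fintype ι] [Fintype κ] (A : Matrix ι κ ℂ) :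
    {s : ℝ | IsSingularValue A s ∧ 0 < s}.Finite := by
  classical
  have hf := Module.End.finite_hasEigenvalue (Matrix.toLin' (Aᴴ * A))
  refine Set.Finite.of_finite_image (f := fun s : ℝ => (s : ℂ) ^ 2) (hf.subset ?_) ?_
  · rintro _ ⟨s, ⟨⟨_, w, hw, h⟩, _⟩, rfl⟩
    refine Module.End.hasEigenvalue_of_hasEigenvector (x := w) ⟨?_, hw⟩
    rw [Module.End.mem_eigenspace_iff]
    simpa using h
  · rintro s ⟨_, hs⟩ t ⟨_, ht⟩ h
    have h' : s ^ 2 = t ^ 2 := by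
      have : (s : ℂ) ^ 2 = (t : ℂ) ^ 2 := h
      exact_mod_cast this
    exact (pow_left_inj₀ hs.le ht.le two_ne_zero).1 h'

theorem sigmaMinPos_nonneg {ι κ : Type*} [Fintype ι] [Fintype κ] (A : Matrix ι κ ℂ) :
    0 ≤ sigmaMinPos A := Real.sInf_nonneg fun _ h => h.2.le

theorem row_solve {ι κ : Type*} [Fintype ι] [Fintype κ] (A : Matrix ι κ ℂ) (x : κ → ℂ) :
    ∃ d : κ → ℂ, A *ᵥ d = A *ᵥ x ∧
      vnorm d ^ 2 ≤ (sigmaMinPos A)⁻¹ ^ 2 * vnorm (A *ᵥ x) ^ 2 := by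
  classical
  have hH : (Aᴴ * A).IsHermitian := Matrix.isHermitian_conjTranspose_mul_self A
  set mu := hH.eigenvalues with hmu
  set U : Matrix κ κ ℂ := (hH.eigenvectorUnitary : Matrix κ κ ℂ) with hU
  have hUU : Uᴴ * U = 1 := Unitary.coe_star_mul_self hH.eigenvectorUnitary
  have hUU' : U * Uᴴ = 1 := Unitary.coe_mul_star_self hH.eigenvectorUnitary
  have hHU : Aᴴ * A = U * Matrix.diagonal (fun a => (mu a : ℂ)) * Uᴴ := by
    have := hH.spectral_theorem
    rw [Unitary.conjStarAlgAut_apply] at this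
    exact this
  have hD : (A * U)ᴴ * (A * U) = Matrix.diagonal (fun a => (mu a : ℂ)) := by
    have : (A * U)ᴴ * (A * U) = Uᴴ * (Aᴴ * A) * U := by
      simp only [conjTranspose_mul, Matrix.mul_assoc]
    rw [this, hHU]
    calc _ = (Uᴴ * U) * Matrix.diagonal (fun a => (mu a : ℂ)) * (Uᴴ * U) := by
          simp only [Matrix.mul_assoc]
      _ = _ := by rw [hUU]; simp
  have hI : Uᴴ * U = Matrix.diagonal (fun a => (((fun _ => 1 : κ → ℝ) a : ℝ) : ℂ)) := by
    rw [hUU]; simp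
  have hmu0 : ∀ a, 0 ≤ mu a := by
    open scoped ComplexOrder in
    exact (Matrix.posSemidef_conjTranspose_mul_self A).eigenvalues_nonneg
  have hkey : ∀ a, mu a ≠ 0 → 0 < sigmaMinPos A ∧ sigmaMinPos A ^ 2 ≤ mu a := by
    intro a ha
    have hpos : 0 < mu a := lt_of_le_of_ne (hmu0 a) (Ne.symm ha)
    have hmem : Real.sqrt (mu a) ∈ {s : ℝ | IsSingularValue A s ∧ 0 < s} := by
      refine ⟨⟨Real.sqrt_nonneg _, hH.eigenvectorBasis a, ?_, ?_⟩, Real.sqrt_pos.2 hpos⟩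
      · intro h0
        have := hH.eigenvectorBasis.orthonormal.ne_zero a
        apply this
        ext i
        exact congrFun h0 i
      · rw [hH.mulVec_eigenvectorBasis a]
        have : ((Real.sqrt (mu a) : ℂ)) ^ 2 = (mu a : ℂ) := by
          exact_mod_cast congrArg (fun t : ℝ => (t : ℂ)) (Real.sq_sqrt hpos.le)
        rw [this]
        funext i
        simp [hmu]
    have h1 : 0 < sigmaMinPos A := (Set.Nonempty.csInf_mem ⟨_, hmem⟩ (sv_finite A)).2
    refine ⟨h1, ?_⟩
    have h2 : sigmaMinPos A ≤ Real.sqrt (mu a) := csInf_le ⟨0, fun _ h => h.2.le⟩ hmem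
    calc _ ≤ Real.sqrt (mu a) ^ 2 := by gcongr
      _ = _ := Real.sq_sqrt hpos.le
  let z := Uᴴ *ᵥ x
  let y : κ → ℂ := fun a => if mu a = 0 then 0 else z a
  have hx : x = U *ᵥ z := by
    simp only [z]; rw [mulVec_mulVec, hUU', one_mulVec]
  have heq : A *ᵥ (U *ᵥ y) = A *ᵥ x := by
    have h0 : (A * U) *ᵥ (y - z) = 0 := by
      apply vnorm_sq_zero
      rw [vnorm_diag _ mu hD]
      refine Finset.sum_eq_zero fun a _ => ?_
      by_cases ha : mu a = 0 <;> simp [y, ha]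
    rw [mulVec_sub, sub_eq_zero] at h0
    rw [hx, mulVec_mulVec, mulVec_mulVec, h0]
  refine ⟨U *ᵥ y, heq, ?_⟩
  rw [← heq, vnorm_diag U _ hI, mulVec_mulVec, vnorm_diag _ mu hD, Finset.mul_sum]
  refine Finset.sum_le_sum fun a _ => ?_
  by_cases ha : mu a = 0
  · simp [y, ha]
  · obtain ⟨h1, h2⟩ := hkey a ha
    rw [← mul_assoc]
    refine mul_le_mul_of_nonneg_right ?_ (sq_nonneg _)
    rw [inv_pow, inv_mul_eq_div, le_div_iff₀ (by positivity), one_mul]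
    exact h2

/-- Upper bound for the eigenvalue backward error: taking for `v̂ᵢ` right singular vectors of
`F(λ̂ᵢ)` associated with its smallest singular value `σ̂ᵢ`, there exist perturbations `δFⱼ`
making all the `(λ̂ᵢ, v̂ᵢ)` exact eigenpairs with
`‖[δF₁, …, δFₖ]‖_F ≤ σ_p̂(G ⊙ᵀ Vᵀ)⁻¹ √(∑ᵢ σ̂ᵢ²) ≤ σ_p̂(G ⊙ᵀ Vᵀ)⁻¹ √p · maxᵢ σ̂ᵢ`;
consequently the eigenvalue backward error satisfies `η ≤ σ_p̂(G ⊙ᵀ Vᵀ)⁻¹ √p · maxᵢ σ̂ᵢ`. -/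
theorem eigenvalue_backward_error_upper_bound (n k p : ℕ) (hp : 0 < p)
    (F : Fin k → Matrix (Fin n) (Fin n) ℂ)
    (f : Fin k → ℂ → ℂ) (lam : Fin p → ℂ)
    (sig : Fin p → ℝ)
    (hsig : ∀ i, sig i = sigmaMinSq (∑ j, f j (lam i) • F j))
    (v : Fin p → Fin n → ℂ)
    (hv : ∀ i, vnorm (v i) = 1)
    (hsv : ∀ i, vnorm ((∑ j, f j (lam i) • F j).mulVec (v i)) = sig i)
    (G : Matrix (Fin p) (Fin k) ℂ) (hG : ∀ i j, G i j = f j (lam i))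
    (W : Matrix (Fin p) (Fin n) ℂ) (hW : ∀ i l, W i l = v i l) :
    (∃ δF : Fin k → Matrix (Fin n) (Fin n) ℂ,
      (∀ i, ∑ j, f j (lam i) • ((F j + δF j).mulVec (v i)) = 0) ∧
      fnorm (Matrix.of fun (m : Fin n) (jl : Fin k × Fin n) => δF jl.1 m jl.2) ≤
        (sigmaMinPos (krt G W))⁻¹ * Real.sqrt (∑ i, sig i ^ 2) ∧
      Real.sqrt (∑ i, sig i ^ 2) ≤ Real.sqrt p * ⨆ i, sig i) ∧
    sInf {x : ℝ | ∃ (δF : Fin k → Matrix (Fin n) (Fin n) ℂ) (w : Fin p → Fin n → ℂ),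
        (∀ i, w i ≠ 0) ∧
        (∀ i, ∑ j, f j (lam i) • ((F j + δF j).mulVec (w i)) = 0) ∧
        x = fnorm (Matrix.of fun (m : Fin n) (jl : Fin k × Fin n) => δF jl.1 m jl.2)}
      ≤ (sigmaMinPos (krt G W))⁻¹ * (Real.sqrt p * ⨆ i, sig i) := by
  classical
  have hex : (∃ δF : Fin k → Matrix (Fin n) (Fin n) ℂ,
      (∀ i, ∑ j, f j (lam i) • ((F j + δF j).mulVec (v i)) = 0) ∧
      fnorm (Matrix.of fun (m : Fin n) (jl : Fin k × Fin n) => δF jl.1 m jl.2) ≤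
        (sigmaMinPos (krt G W))⁻¹ * Real.sqrt (∑ i, sig i ^ 2) ∧
      Real.sqrt (∑ i, sig i ^ 2) ≤ Real.sqrt p * ⨆ i, sig i) := by
    have hK : ∀ (B : Fin k → Matrix (Fin n) (Fin n) ℂ) (m : Fin n) (i : Fin p),
        (krt G W *ᵥ fun jl => B jl.1 m jl.2) i = (∑ j, f j (lam i) • (B j *ᵥ v i)) m := by
      intro B m i
      simp only [krt, mulVec, dotProduct, Matrix.of_apply, Fintype.sum_prod_type, hG, hW,
        Finset.sum_apply, Pi.smul_apply, smul_eq_mul, Finset.mul_sum]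
      refine Finset.sum_congr rfl fun j _ => Finset.sum_congr rfl fun l _ => ?_
      ring
    have hR : ∀ i, (∑ j, f j (lam i) • F j) *ᵥ v i = ∑ j, f j (lam i) • (F j *ᵥ v i) := by
      intro i
      simp only [sum_mulVec, smul_mulVec]
    choose d hd1 hd2 using fun m : Fin n => row_solve (krt G W) (fun jl => F jl.1 m jl.2)
    have hs : ∀ i, 0 ≤ sig i := fun i => by rw [← hsv]; exact Real.sqrt_nonneg _
    refine ⟨fun j => Matrix.of fun m l => - d m (j, l), ?_, ?_, ?_⟩
    · intro i
      funext m
      have h1 := hK (fun j => F j + (Matrix.of fun m l => - d m (j, l))) m i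
      rw [← h1]
      have : (fun jl : Fin k × Fin n =>
          (F jl.1 + (Matrix.of fun m l => - d m (jl.1, l))) m jl.2)
          = (fun jl => F jl.1 m jl.2) - d m := by
        funext jl
        rw [Matrix.add_apply]
        simp [sub_eq_add_neg]
      rw [this, mulVec_sub, hd1]
      simp
    · have hsum : ∑ m, vnorm (krt G W *ᵥ fun jl => F jl.1 m jl.2) ^ 2 = ∑ i, sig i ^ 2 := by
        simp_rw [vnorm_sq', ← hsv, vnorm_sq', hR, hK]
        exact Finset.sum_comm
      have hpos : 0 ≤ (sigmaMinPos (krt G W))⁻¹ := inv_nonneg.2 (sigmaMinPos_nonneg _)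
      unfold fnorm
      refine Real.sqrt_le_iff.2 ⟨by positivity, ?_⟩
      rw [mul_pow, Real.sq_sqrt (Finset.sum_nonneg fun _ _ => sq_nonneg _), ← hsum,
        Finset.mul_sum]
      refine Finset.sum_le_sum fun m _ => ?_
      refine le_trans (le_of_eq ?_) (hd2 m)
      rw [vnorm_sq']
      simp
    · have hle : ∀ i, sig i ≤ ⨆ i, sig i := fun i => le_ciSup (Set.finite_range sig).bddAbove i
      have h0 : 0 ≤ ⨆ i, sig i := (hs ⟨0, hp⟩).trans (hle _)
      refine Real.sqrt_le_iff.2 ⟨by positivity, ?_⟩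
      rw [mul_pow, Real.sq_sqrt (Nat.cast_nonneg p)]
      calc _ ≤ ∑ i : Fin p, (⨆ i, sig i) ^ 2 :=
            Finset.sum_le_sum fun i _ => pow_le_pow_left₀ (hs i) (hle i) 2
        _ = _ := by simp
  refine ⟨hex, ?_⟩
  obtain ⟨δF, h1, h2, h3⟩ := hex
  refine le_trans (csInf_le ⟨0, ?_⟩ ⟨δF, v, ?_, h1, rfl⟩) (h2.trans ?_)
  · rintro _ ⟨_, _, _, _, rfl⟩
    exact Real.sqrt_nonneg _
  · intro i h
    have := hv i
    rw [h] at this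
    simp [vnorm] at this
  · exact mul_le_mul_of_nonneg_left h3 (inv_nonneg.2 (sigmaMinPos_nonneg _))
end
end

section
/- For a single approximate eigenvalue λ̂_1 ∈ ℂ (the case p = 1), the eigenvalue backward error equals η = σ̂_1 / √(Σ_{j=1}^k |f_j(λ̂_1)|²), where σ̂_1 is the smallest singular value of F(λ̂_1) = Σ_{j=1}^k f_j(λ̂_1) F_j. That is: (a) there exist δF_1, …, δF_k ∈ ℂ^{n×n} and a nonzero v ∈ ℂ^n with Σ_j f_j(λ̂_1)(F_j + δF_j) v = 0 and ‖[δF_1, …, δF_k]‖_F = σ̂_1 / √(Σ_j |f_j(λ̂_1)|²); and (b) no such perturbation has smaller norm. -/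
open Matrix Kronecker BigOperators

noncomputable section

lemma aux_vnorm_eq {n : ℕ} (v : Fin n → ℂ) : vnorm v = ‖WithLp.toLp 2 v‖ := by
  rw [EuclideanSpace.norm_eq]; rfl

lemma aux_vnorm_sq {n : ℕ} (v : Fin n → ℂ) : vnorm v ^ 2 = ∑ i, ‖v i‖ ^ 2 :=
  Real.sq_sqrt (Finset.sum_nonneg fun _ _ => by positivity)

lemma aux_vnorm_smul {n : ℕ} (c : ℂ) (v : Fin n → ℂ) : vnorm (c • v) = ‖c‖ * vnorm v := by
  rw [aux_vnorm_eq, aux_vnorm_eq, WithLp.toLp_smul, norm_smul]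

lemma aux_exists_min {n : ℕ} (hn : 0 < n) (A : Matrix (Fin n) (Fin n) ℂ) :
    ∃ w : Fin n → ℂ, vnorm w = 1 ∧ vnorm (A.mulVec w) = sigmaMinSq A := by
  have : Nonempty (Fin n) := ⟨⟨0, hn⟩⟩
  have hc : IsCompact (Metric.sphere (0 : EuclideanSpace ℂ (Fin n)) 1) := isCompact_sphere _ _
  have hne : (Metric.sphere (0 : EuclideanSpace ℂ (Fin n)) 1).Nonempty :=
    ⟨EuclideanSpace.single ⟨0, hn⟩ 1, by simp⟩
  have hcont : Continuous fun x : EuclideanSpace ℂ (Fin n) => vnorm (A.mulVec x.ofLp) := by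
    simp only [aux_vnorm_eq]
    have h1 : Continuous fun x : EuclideanSpace ℂ (Fin n) => A.mulVec x.ofLp :=
      Continuous.matrix_mulVec continuous_const (PiLp.continuous_ofLp 2 _)
    exact ((PiLp.continuous_toLp 2 _).comp h1).norm
  obtain ⟨x, hx, hmin⟩ := hc.exists_isMinOn hne hcont.continuousOn
  refine ⟨x.ofLp, by rw [aux_vnorm_eq]; simpa using hx, ?_⟩
  symm
  apply IsLeast.csInf_eq
  refine ⟨⟨x.ofLp, by rw [aux_vnorm_eq]; simpa using hx, rfl⟩, ?_⟩
  rintro y ⟨w, hw, rfl⟩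
  have := hmin (show WithLp.toLp 2 w ∈ Metric.sphere (0 : EuclideanSpace ℂ (Fin n)) 1 by
    rw [aux_vnorm_eq] at hw; simpa using hw)
  simpa using this

lemma aux_sigma_le {n : ℕ} (A : Matrix (Fin n) (Fin n) ℂ) (v : Fin n → ℂ) (hv : v ≠ 0) :
    sigmaMinSq A * vnorm v ≤ vnorm (A.mulVec v) := by
  have hpos : 0 < vnorm v := by
    rw [aux_vnorm_eq, norm_pos_iff]
    intro h
    exact hv (by simpa using h)
  have hle : sigmaMinSq A ≤ vnorm (A.mulVec (((vnorm v)⁻¹ : ℂ) • v)) := by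
    apply csInf_le
    · refine ⟨0, ?_⟩
      rintro y ⟨w, _, rfl⟩
      exact Real.sqrt_nonneg _
    · refine ⟨_, ?_, rfl⟩
      rw [aux_vnorm_smul, norm_inv, Complex.norm_real, Real.norm_of_nonneg hpos.le,
        inv_mul_cancel₀ hpos.ne']
  rw [Matrix.mulVec_smul, aux_vnorm_smul, norm_inv, Complex.norm_real,
    Real.norm_of_nonneg hpos.le] at hle
  calc sigmaMinSq A * vnorm v ≤ ((vnorm v)⁻¹ * vnorm (A.mulVec v)) * vnorm v := by gcongr
    _ = vnorm (A.mulVec v) := by field_simp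

/-- For a single approximate eigenvalue `λ̂₁` (the case `p = 1`), the eigenvalue backward
error equals `σ̂₁ / √(∑ⱼ |fⱼ(λ̂₁)|²)`, where `σ̂₁` is the smallest singular value of
`F(λ̂₁) = ∑ⱼ fⱼ(λ̂₁) Fⱼ`: the minimum over all perturbations `δFⱼ` and nonzero vectors `v`
with `∑ⱼ fⱼ(λ̂₁)(Fⱼ + δFⱼ) v = 0` of `‖[δF₁, …, δFₖ]‖_F` is attained and has this value. -/
theorem backward_error_single_eigenvalue (n k : ℕ) (hn : 0 < n)
    (F : Fin k → Matrix (Fin n) (Fin n) ℂ)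
    (f : Fin k → ℂ → ℂ) (lam1 : ℂ)
    (hf : ∃ j, f j lam1 ≠ 0)
    (sig1 : ℝ) (hsig : sig1 = sigmaMinSq (∑ j, f j lam1 • F j)) :
    IsLeast
      {x : ℝ | ∃ (δF : Fin k → Matrix (Fin n) (Fin n) ℂ) (v : Fin n → ℂ), v ≠ 0 ∧
        (∑ j, f j lam1 • ((F j + δF j).mulVec v)) = 0 ∧
        x = fnorm (Matrix.of fun (m : Fin n) (jl : Fin k × Fin n) => δF jl.1 m jl.2)}
      (sig1 / Real.sqrt (∑ j, ‖f j lam1‖ ^ 2)) := by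
  subst hsig
  set g : Fin k → ℂ := fun j => f j lam1 with hg
  change IsLeast {x : ℝ | ∃ (δF : Fin k → Matrix (Fin n) (Fin n) ℂ) (v : Fin n → ℂ), v ≠ 0 ∧
        (∑ j, g j • ((F j + δF j).mulVec v)) = 0 ∧
        x = fnorm (Matrix.of fun (m : Fin n) (jl : Fin k × Fin n) => δF jl.1 m jl.2)}
      (sigmaMinSq (∑ j, g j • F j) / Real.sqrt (∑ j, ‖g j‖ ^ 2))
  have hS : 0 < ∑ j, ‖g j‖ ^ 2 := by
    obtain ⟨j, hj⟩ := hf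
    refine Finset.sum_pos' (fun _ _ => by positivity) ⟨j, Finset.mem_univ _, ?_⟩
    have : 0 < ‖g j‖ := norm_pos_iff.mpr hj
    positivity
  set S := ∑ j, ‖g j‖ ^ 2 with hSdef
  set A := ∑ j, g j • F j with hA
  have hAv : ∀ v, A.mulVec v = ∑ j, g j • (F j).mulVec v := by
    intro v
    simp only [hA, Matrix.sum_mulVec, Matrix.smul_mulVec]
  constructor
  · obtain ⟨w, hw, hmin⟩ := aux_exists_min hn A
    have hw2 : ∑ i, ‖w i‖ ^ 2 = 1 := by rw [← aux_vnorm_sq, hw]; norm_num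
    have hww : star w ⬝ᵥ w = 1 := by
      have : star w ⬝ᵥ w = ((∑ i, ‖w i‖ ^ 2 : ℝ) : ℂ) := by
        simp only [dotProduct, Pi.star_apply, RCLike.star_def, Complex.conj_mul']
        push_cast; rfl
      rw [this, hw2]; norm_num
    have hgg : ∑ j, g j * star (g j) = (S : ℂ) := by
      simp only [RCLike.star_def, Complex.mul_conj', hSdef]
      push_cast; rfl
    have hSc : (S : ℂ) ≠ 0 := by exact_mod_cast hS.ne'
    refine ⟨fun j => (-(star (g j) / S)) • Matrix.vecMulVec (A.mulVec w) (star w), w, ?_, ?_, ?_⟩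
    · rintro rfl
      simp at hww
    · simp only [Matrix.add_mulVec, smul_add, Finset.sum_add_distrib, ← hAv, Matrix.smul_mulVec,
        Matrix.vecMulVec_mulVec, hww, smul_smul, ← Finset.sum_smul]
      have : ∑ j, g j * -(star (g j) / (S : ℂ)) = -1 := by
        have h2 : ∀ j, g j * -(star (g j) / (S : ℂ)) = -(g j * star (g j)) / S := by
          intro j; ring
        simp only [h2]
        rw [← Finset.sum_div, Finset.sum_neg_distrib, hgg, neg_div, div_self hSc]
      rw [this]
      simp
    · have key : ∑ m, ∑ jl : Fin k × Fin n, ‖(Matrix.of fun (m : Fin n) (jl : Fin k × Fin n) =>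
          ((-(star (g jl.1) / (S : ℂ))) • Matrix.vecMulVec (A.mulVec w) (star w)) m jl.2) m jl‖ ^ 2
          = vnorm (A.mulVec w) ^ 2 / S := by
        have h3 : ∀ m (jl : Fin k × Fin n), ‖(Matrix.of fun (m : Fin n) (jl : Fin k × Fin n) =>
          ((-(star (g jl.1) / (S : ℂ))) • Matrix.vecMulVec (A.mulVec w) (star w)) m jl.2) m jl‖ ^ 2
          = ‖A.mulVec w m‖ ^ 2 / S ^ 2 * (‖g jl.1‖ ^ 2 * ‖w jl.2‖ ^ 2) := by
          intro m jl
          simp [Matrix.vecMulVec_apply, abs_of_pos hS]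
          ring
        simp only [h3, ← Finset.mul_sum, Fintype.sum_prod_type, hw2, mul_one, ← hSdef]
        rw [← Finset.sum_mul, ← Finset.sum_div, aux_vnorm_sq]
        field_simp
      unfold fnorm
      rw [key, Real.sqrt_div (by positivity), Real.sqrt_sq (show 0 ≤ vnorm (A.mulVec w) from Real.sqrt_nonneg _), hmin]
  · rintro x ⟨δF, v, hv, h0, rfl⟩
    set D : Matrix (Fin n) (Fin k × Fin n) ℂ :=
      Matrix.of fun (m : Fin n) (jl : Fin k × Fin n) => δF jl.1 m jl.2 with hD
    have hvpos : 0 < vnorm v := by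
      rw [aux_vnorm_eq, norm_pos_iff]
      intro h
      exact hv (by simpa using h)
    have hneg : A.mulVec v = - ∑ j, g j • (δF j).mulVec v := by
      simp only [Matrix.add_mulVec, smul_add, Finset.sum_add_distrib, ← hAv] at h0
      exact eq_neg_of_add_eq_zero_left h0
    have hcomp : ∀ m, ‖A.mulVec v m‖ ^ 2 ≤ (∑ jl, ‖D m jl‖ ^ 2) * (S * vnorm v ^ 2) := by
      intro m
      have e1 : A.mulVec v m = - ∑ jl : Fin k × Fin n, D m jl * (g jl.1 * v jl.2) := by
        rw [hneg, Fintype.sum_prod_type]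
        simp only [Pi.neg_apply, Finset.sum_apply, Pi.smul_apply, smul_eq_mul, Matrix.mulVec,
          dotProduct, Finset.mul_sum, hD, Matrix.of_apply]
        congr 1
        refine Finset.sum_congr rfl fun j _ => Finset.sum_congr rfl fun l _ => by ring
      have e2 : S * vnorm v ^ 2 = ∑ jl : Fin k × Fin n, ‖g jl.1 * v jl.2‖ ^ 2 := by
        rw [aux_vnorm_sq, hSdef, Finset.sum_mul_sum, Fintype.sum_prod_type]
        simp only [norm_mul, mul_pow]
      rw [e1, e2, norm_neg]
      refine le_trans ?_ (Finset.sum_mul_sq_le_sq_mul_sq _ _ _)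
      gcongr
      refine (norm_sum_le _ _).trans_eq ?_
      simp only [norm_mul]
    have hfn : fnorm D ^ 2 = ∑ m, ∑ jl, ‖D m jl‖ ^ 2 :=
      Real.sq_sqrt (Finset.sum_nonneg fun _ _ => Finset.sum_nonneg fun _ _ => by positivity)
    have hf0 : 0 ≤ fnorm D := Real.sqrt_nonneg _
    have hsum : vnorm (A.mulVec v) ^ 2 ≤ (fnorm D * Real.sqrt S * vnorm v) ^ 2 := by
      rw [aux_vnorm_sq, mul_pow, mul_pow, hfn, Real.sq_sqrt hS.le, mul_assoc, Finset.sum_mul]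
      exact Finset.sum_le_sum fun m _ => hcomp m
    have hle := (le_abs_self _).trans (abs_le_of_sq_le_sq hsum (by positivity))
    have h4 := (aux_sigma_le A v hv).trans hle
    rw [div_le_iff₀ (Real.sqrt_pos.mpr hS)]
    exact le_of_mul_le_mul_right h4 hvpos
end
end

section
/- Assume each coefficient F_j lies in a linear subspace 𝒮_j = span(P^{(1,j)}, …, P^{(d_j,j)}) ⊆ ℂ^{n×n}, where the basis matrices P^{(i,j)} are orthonormal with respect to the Frobenius inner product. Then the structured backward error of the approximate eigenpairs (V, Λ) satisfies η_𝒮 ≤ σ_min(((G ⊙^T V^T) ⊗ I_n) P)^{−1} ‖R‖_F, where σ_min denotes the smallest nonzero singular value of the matrix ((G ⊙^T V^T) ⊗ I_n) P. -/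
open Matrix Kronecker BigOperators

noncomputable section

theorem aux_quad {ι κ : Type*} [Fintype ι] [Fintype κ] [DecidableEq κ] (A : Matrix ι κ ℂ)
    (hH : (Aᴴ * A).IsHermitian) (x : EuclideanSpace ℂ κ) :
    ∑ i, ‖(A *ᵥ x.ofLp) i‖ ^ 2 = ∑ i, hH.eigenvalues i * ‖hH.eigenvectorBasis.repr x i‖ ^ 2 := by
  have h1 : ((∑ i, ‖(A *ᵥ x.ofLp) i‖ ^ 2 : ℝ) : ℂ) = star x.ofLp ⬝ᵥ ((Aᴴ * A) *ᵥ x.ofLp) := by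
    rw [← Matrix.mulVec_mulVec, Matrix.dotProduct_mulVec, ← Matrix.star_mulVec]
    simp only [dotProduct, Pi.star_apply, RCLike.star_def, Complex.conj_mul']
    push_cast
    rfl
  have h2 : star x.ofLp ⬝ᵥ ((Aᴴ * A) *ᵥ x.ofLp)
      = inner ℂ x (WithLp.toLp 2 ((Aᴴ * A) *ᵥ x.ofLp)) := by
    rw [EuclideanSpace.inner_eq_star_dotProduct, dotProduct_comm]
  have h3 : ∀ i, inner ℂ (hH.eigenvectorBasis i) (WithLp.toLp 2 ((Aᴴ * A) *ᵥ x.ofLp))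
      = hH.eigenvalues i * inner ℂ (hH.eigenvectorBasis i) x := by
    intro i
    rw [EuclideanSpace.inner_eq_star_dotProduct, EuclideanSpace.inner_eq_star_dotProduct,
      dotProduct_comm, Matrix.dotProduct_mulVec]
    have : star (hH.eigenvectorBasis i).ofLp ᵥ* (Aᴴ * A)
        = star ((Aᴴ * A) *ᵥ (hH.eigenvectorBasis i).ofLp) := by
      rw [Matrix.star_mulVec, hH.eq]
    rw [this, hH.mulVec_eigenvectorBasis, dotProduct_comm]
    simp [dotProduct, Finset.mul_sum]
    refine Finset.sum_congr rfl fun j _ => by ring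
  have h4 : ((∑ i, ‖(A *ᵥ x.ofLp) i‖ ^ 2 : ℝ) : ℂ) =
      ((∑ i, hH.eigenvalues i * ‖hH.eigenvectorBasis.repr x i‖ ^ 2 : ℝ) : ℂ) := by
    rw [h1, h2, ← hH.eigenvectorBasis.sum_inner_mul_inner]
    push_cast
    refine Finset.sum_congr rfl fun i _ => ?_
    rw [h3, OrthonormalBasis.repr_apply_apply, ← inner_conj_symm, ← Complex.conj_mul']
    ring
  exact_mod_cast h4

open scoped ComplexOrder in
theorem aux_core {ι κ : Type*} [Fintype ι] [Fintype κ] (A : Matrix ι κ ℂ) (c : κ → ℂ) :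
    ∃ y : κ → ℂ, A *ᵥ y = A *ᵥ c ∧ vnorm y ≤ (sigmaMinPos A)⁻¹ * vnorm (A *ᵥ c) := by
  classical
  have hH : (Aᴴ * A).IsHermitian := Matrix.isHermitian_conjTranspose_mul_self A
  have hpos : ∀ i, 0 ≤ hH.eigenvalues i :=
    fun i => (Matrix.posSemidef_conjTranspose_mul_self A).eigenvalues_nonneg i
  set b := hH.eigenvectorBasis with hb
  let cE : EuclideanSpace ℂ κ := WithLp.toLp 2 c
  let y : EuclideanSpace ℂ κ := b.repr.symm
    (WithLp.toLp 2 fun i => if hH.eigenvalues i = 0 then 0 else b.repr cE i)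
  have hy : ∀ i, b.repr y i = if hH.eigenvalues i = 0 then 0 else b.repr cE i := by
    intro i; simp [y]
  have hAy : A *ᵥ y.ofLp = A *ᵥ c := by
    have h0 := aux_quad A hH (y - cE)
    have h1 : ∑ i, hH.eigenvalues i * ‖hH.eigenvectorBasis.repr (y - cE) i‖ ^ 2 = 0 := by
      refine Finset.sum_eq_zero fun i _ => ?_
      rw [← hb, map_sub, PiLp.sub_apply, hy]
      split_ifs with h <;> simp [h]
    rw [h1, Finset.sum_eq_zero_iff_of_nonneg (fun i _ => by positivity)] at h0
    have h2 : A *ᵥ (y - cE).ofLp = 0 := by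
      ext i
      have := h0 i (Finset.mem_univ _)
      simpa using this
    rw [WithLp.ofLp_sub, Matrix.mulVec_sub, sub_eq_zero] at h2
    exact h2
  have hfin : {s : ℝ | IsSingularValue A s ∧ 0 < s}.Finite := by
    have hf := (Module.End.finite_hasEigenvalue (Matrix.toLin' (Aᴴ * A)))
    refine Set.Finite.of_finite_image (f := fun s : ℝ => (s : ℂ) ^ 2) (hf.subset ?_) ?_
    · rintro _ ⟨s, ⟨⟨_, w, hw, hw2⟩, _⟩, rfl⟩
      refine Module.End.hasEigenvalue_of_hasEigenvector (x := w) ⟨?_, hw⟩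
      rw [Module.End.mem_eigenspace_iff, Matrix.toLin'_apply]
      exact hw2
    · intro s hs t ht hst
      have h : s ^ 2 = t ^ 2 := by
        have h' : (s : ℂ) ^ 2 = (t : ℂ) ^ 2 := hst
        exact_mod_cast h'
      exact (sq_eq_sq₀ hs.2.le ht.2.le).1 h
  have hle : ∀ i, hH.eigenvalues i ≠ 0 →
      IsSingularValue A (√(hH.eigenvalues i)) ∧ 0 < √(hH.eigenvalues i) := by
    intro i hi
    refine ⟨⟨Real.sqrt_nonneg _, (b i).ofLp, ?_, ?_⟩,
      Real.sqrt_pos.2 (lt_of_le_of_ne (hpos i) (Ne.symm hi))⟩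
    · intro h
      apply b.toBasis.ne_zero i
      ext j
      simpa using congrFun h j
    · rw [hb, hH.mulVec_eigenvectorBasis]
      ext j
      have : ((√(hH.eigenvalues i) : ℝ) : ℂ) ^ 2 = (hH.eigenvalues i : ℂ) := by
        exact_mod_cast Real.sq_sqrt (hpos i)
      simp [this]
  have hyn : vnorm y.ofLp = √(∑ i, ‖b.repr y i‖ ^ 2) := by
    have := b.repr.norm_map y
    rw [EuclideanSpace.norm_eq, EuclideanSpace.norm_eq] at this
    exact this.symm
  refine ⟨y.ofLp, hAy, ?_⟩
  by_cases hne : ∃ i, hH.eigenvalues i ≠ 0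
  · obtain ⟨i₀, hi₀⟩ := hne
    have hmem : sigmaMinPos A ∈ {s : ℝ | IsSingularValue A s ∧ 0 < s} :=
      Set.Nonempty.csInf_mem ⟨_, hle i₀ hi₀⟩ hfin
    have hσ : 0 < sigmaMinPos A := hmem.2
    rw [← hAy, ← div_eq_inv_mul, le_div_iff₀ hσ, mul_comm, hyn]
    unfold vnorm
    rw [aux_quad A hH y]
    refine Real.le_sqrt_of_sq_le ?_
    rw [mul_pow, Real.sq_sqrt (by positivity), Finset.mul_sum]
    refine Finset.sum_le_sum fun i _ => ?_
    by_cases h : hH.eigenvalues i = 0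
    · rw [hy]; simp [h]
    · refine mul_le_mul_of_nonneg_right ?_ (by positivity)
      have : sigmaMinPos A ≤ √(hH.eigenvalues i) := csInf_le hfin.bddBelow (hle i h)
      calc sigmaMinPos A ^ 2 ≤ (√(hH.eigenvalues i)) ^ 2 := by gcongr
        _ = _ := Real.sq_sqrt (hpos i)
  · push Not at hne
    have : vnorm y.ofLp = 0 := by rw [hyn]; simp [hy, hne]
    rw [this]
    refine mul_nonneg (inv_nonneg.2 (Real.sInf_nonneg fun s hs => hs.2.le)) (Real.sqrt_nonneg _)

/-- Structured backward error bound for coefficients in linear subspaces `𝒮ⱼ` spanned by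
Frobenius-orthonormal bases `P^(i,j)`:
`η_𝒮 ≤ σ_min(((G ⊙ᵀ Vᵀ) ⊗ Iₙ) P)⁻¹ ‖R‖_F`, where `σ_min` denotes the smallest nonzero
singular value. -/
theorem structured_backward_error_upper_bound (n k p : ℕ)
    (F : Fin k → Matrix (Fin n) (Fin n) ℂ)
    (f : Fin k → ℂ → ℂ) (lam : Fin p → ℂ)
    (V : Matrix (Fin n) (Fin p) ℂ)
    (d : Fin k → ℕ)
    (P : (j : Fin k) → Fin (d j) → Matrix (Fin n) (Fin n) ℂ)
    (hP : ∀ j a b, ∑ m, ∑ l, (starRingEnd ℂ) (P j a m l) * P j b m l =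
      if a = b then 1 else 0)
    (hF : ∀ j, F j ∈ Submodule.span ℂ (Set.range (P j)))
    (G : Matrix (Fin p) (Fin k) ℂ) (hG : ∀ i j, G i j = f j (lam i))
    (R : Matrix (Fin n) (Fin p) ℂ)
    (hR : R = ∑ j, F j * V * Matrix.diagonal fun i => f j (lam i))
    (r : Fin p × Fin n → ℂ) (hr : ∀ i m, r (i, m) = R m i)
    (Pm : Matrix ((Fin k × Fin n) × Fin n) ((j : Fin k) × Fin (d j)) ℂ)
    (hPm : ∀ jl m c, Pm (jl, m) c = if jl.1 = c.1 then P c.1 c.2 m jl.2 else 0) :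
    sInf {x : ℝ | ∃ δF : Fin k → Matrix (Fin n) (Fin n) ℂ,
        (∀ j, δF j ∈ Submodule.span ℂ (Set.range (P j))) ∧
        (∑ j, (F j + δF j) * V * Matrix.diagonal fun i => f j (lam i)) = 0 ∧
        x = fnorm (Matrix.of fun (m : Fin n) (jl : Fin k × Fin n) => δF jl.1 m jl.2)}
      ≤ (sigmaMinPos ((krt G Vᵀ ⊗ₖ (1 : Matrix (Fin n) (Fin n) ℂ)) * Pm))⁻¹ * fnorm R := by
  have hspan : ∀ j, ∃ c : Fin (d j) → ℂ, ∑ a, c a • P j a = F j := fun j =>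
    (Submodule.mem_span_range_iff_exists_fun ℂ).1 (hF j)
  choose c hc using hspan
  set M := (krt G Vᵀ ⊗ₖ (1 : Matrix (Fin n) (Fin n) ℂ)) * Pm with hM
  have hMv : ∀ (y : ((j : Fin k) × Fin (d j)) → ℂ) (i : Fin p) (m : Fin n),
      (M *ᵥ y) (i, m) = (∑ j, (∑ a, y ⟨j, a⟩ • P j a) * V *
        Matrix.diagonal fun i => f j (lam i)) m i := by
    intro y i m
    have hPy : ∀ j l m', (Pm *ᵥ y) ((j, l), m') = (∑ a, y ⟨j, a⟩ • P j a) m' l := by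
      intro j l m'
      simp only [mulVec, dotProduct, hPm, Matrix.sum_apply, Matrix.smul_apply, smul_eq_mul]
      rw [Fintype.sum_sigma, Finset.sum_eq_single j]
      · simp [mul_comm]
      · intro b _ hb
        simp [hb.symm]
      · simp
    rw [hM, ← Matrix.mulVec_mulVec]
    simp only [mulVec, dotProduct] at hPy ⊢
    rw [Fintype.sum_prod_type]
    simp only [hPy, kroneckerMap_apply, Matrix.one_apply, mul_ite, mul_one, mul_zero, ite_mul,
      zero_mul, Finset.sum_ite_eq, Finset.mem_univ, if_true]
    rw [Fintype.sum_prod_type, Matrix.sum_apply]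
    refine Finset.sum_congr rfl fun j _ => ?_
    rw [Matrix.mul_diagonal, Matrix.mul_apply, Finset.sum_mul]
    refine Finset.sum_congr rfl fun l _ => ?_
    simp only [krt, Matrix.of_apply, Matrix.transpose_apply, hG]
    ring
  obtain ⟨y, hy1, hy2⟩ := aux_core M (fun c' => c c'.1 c'.2)
  have hMc : ∀ i m, (M *ᵥ (fun c' : (j : Fin k) × Fin (d j) => c c'.1 c'.2)) (i, m) = R m i := by
    intro i m
    rw [hMv, hR]
    simp only [hc]
  have hRn : vnorm (M *ᵥ (fun c' : (j : Fin k) × Fin (d j) => c c'.1 c'.2)) = fnorm R := by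
    unfold vnorm fnorm
    rw [Fintype.sum_prod_type_right]
    simp only [hMc]
  have hnorm : ∀ j, ∑ m, ∑ l, ‖(-∑ a, y ⟨j, a⟩ • P j a) m l‖ ^ 2 = ∑ a, ‖y ⟨j, a⟩‖ ^ 2 := by
    intro j
    have : ((∑ m, ∑ l, ‖(-∑ a, y ⟨j, a⟩ • P j a) m l‖ ^ 2 : ℝ) : ℂ)
        = ((∑ a, ‖y ⟨j, a⟩‖ ^ 2 : ℝ) : ℂ) := by
      push_cast
      simp only [Matrix.neg_apply, norm_neg, ← Complex.conj_mul', Matrix.sum_apply,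
        Matrix.smul_apply, smul_eq_mul, map_sum, map_mul, Finset.sum_mul_sum]
      calc _ = ∑ a, ∑ b, (starRingEnd ℂ) (y ⟨j, a⟩) * y ⟨j, b⟩ *
            ∑ m, ∑ l, (starRingEnd ℂ) (P j a m l) * P j b m l := by
            simp only [Finset.mul_sum]
            rw [Finset.sum_congr rfl fun m _ => Finset.sum_comm, Finset.sum_comm]
            refine Finset.sum_congr rfl fun a _ => ?_
            rw [Finset.sum_congr rfl fun m _ => Finset.sum_comm, Finset.sum_comm]
            refine Finset.sum_congr rfl fun b _ => Finset.sum_congr rfl fun m _ =>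
              Finset.sum_congr rfl fun l _ => by ring
        _ = _ := by simp [hP]
    exact_mod_cast this
  rw [hRn] at hy2
  refine le_trans ?_ hy2
  refine csInf_le ⟨0, ?_⟩ ⟨fun j => -∑ a, y ⟨j, a⟩ • P j a, ?_, ?_, ?_⟩
  · rintro x ⟨_, _, _, rfl⟩
    exact Real.sqrt_nonneg _
  · intro j
    exact Submodule.neg_mem _ (Submodule.sum_mem _ fun a _ =>
      Submodule.smul_mem _ _ (Submodule.subset_span ⟨a, rfl⟩))
  · simp only [Matrix.add_mul, Finset.sum_add_distrib, Matrix.neg_mul, Finset.sum_neg_distrib]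
    rw [← hR, ← sub_eq_add_neg, sub_eq_zero]
    ext m i
    rw [← hMv, hy1, hMc]
  · unfold fnorm vnorm
    congr 1
    symm
    simp only [Matrix.of_apply]
    rw [Fintype.sum_sigma, Finset.sum_congr rfl fun m _ => Fintype.sum_prod_type _,
      Finset.sum_comm]
    exact Finset.sum_congr rfl fun j _ => hnorm j
end
end
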